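/- Let f be a homeomorphism of the open annulus 𝔸 isotopic to the identity and satisfying the intersection property, and let F be a lift of f to ℝ². If a compact set K ⊂ 𝔸 separates the two ends N and S of 𝔸, then Rot_weak,K(F) ≠ ∅. Consequently Rot_weak(F) ≠ ∅. -/

import Mathlib

open Filter Topology Set

noncomputable section

/-- The plane ℝ². -/
abbrev Plane := ℝ × ℝ

/-- The open annulus 𝔸 = ℝ/ℤ × ℝ. -/
abbrev Ann := AddCircle (1 : ℝ) × ℝ

/-- The covering map π : ℝ² → 𝔸, (x,y) ↦ (x + ℤ, y). -/
def prj : Plane → Ann := fun p => ((p.1 : AddCircle (1 : ℝ)), p.2)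

/-- The deck transformation T^k : ℝ² → ℝ², (x,y) ↦ (x + k, y). -/
def Tr (k : ℤ) : Plane → Plane := fun p => (p.1 + (k : ℝ), p.2)

/-- `F` is a lift of `f` to the universal cover ℝ² of the annulus. -/
def IsLift (f : Ann ≃ₜ Ann) (F : Plane ≃ₜ Plane) : Prop :=
  ∀ p : Plane, prj (F p) = f (prj p)

/-- `f` is isotopic to the identity: there is a continuous family of homeomorphisms
joining the identity to `f`. -/
def IsotopicToId (f : Ann ≃ₜ Ann) : Prop :=
  ∃ H : ℝ → Ann → Ann,
    Continuous (fun q : ℝ × Ann => H q.1 q.2) ∧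
    (∀ t : ℝ, ∃ h : Ann ≃ₜ Ann, ∀ z, H t z = h z) ∧
    (∀ z, H 0 z = z) ∧ (∀ z, H 1 z = f z)

/-- An essential circle in 𝔸: a simple closed curve which is not null-homotopic. -/
def IsEssentialCircle (c : Set Ann) : Prop :=
  ∃ φ : C(AddCircle (1 : ℝ), Ann), Function.Injective φ ∧ Set.range φ = c ∧
    ¬ ∃ pt : Ann, φ.Homotopic (ContinuousMap.const _ pt)

/-- `f` has the intersection property: every essential circle meets its image. -/
def IntersectionProperty (f : Ann → Ann) : Prop :=
  ∀ c : Set Ann, IsEssentialCircle c → (c ∩ f '' c).Nonempty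

/-- `z` is a positively recurrent point of `g`: some subsequence of the forward orbit
of `z` converges to `z`. -/
def PosRec {X : Type*} [TopologicalSpace X] (g : X → X) (z : X) : Prop :=
  ∃ φ : ℕ → ℕ, StrictMono φ ∧ Tendsto (fun k => g^[φ k] z) atTop (𝓝 z)

/-- The positively recurrent point `z` has rotation number `ρ` for the lift `F` of `f`. -/
def HasRotNum (f : Ann → Ann) (F : Plane → Plane) (z : Ann) (ρ : ℝ) : Prop :=
  PosRec f z ∧
    ∀ zt : Plane, prj zt = z →
      ∀ φ : ℕ → ℕ, StrictMono φ →
        Tendsto (fun k => f^[φ k] z) atTop (𝓝 z) →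
        Tendsto (fun k => ((F^[φ k] zt).1 - zt.1) / (φ k : ℝ)) atTop (𝓝 ρ)

/-- The rotation set Rot(F): the set of rotation numbers of positively recurrent
points of `f`. -/
def Rot (f : Ann → Ann) (F : Plane → Plane) : Set ℝ := {ρ | ∃ z, HasRotNum f F z ρ}

/-- The region `L(Γ)` of the plane on the left (west) of a line `Γ` (as a subset of ℝ²):
points lying in the connected component of the complement of `Γ` containing all far-west
points of the horizontal axis. -/
def Lset (Γ : Set Plane) : Set Plane :=
  {p | ∃ s : ℝ, ∀ x ≤ s, p ∈ connectedComponentIn Γᶜ ((x, 0) : Plane)}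

/-- The region `R(Γ)` of the plane on the right (east) of a line `Γ`. -/
def Rset (Γ : Set Plane) : Set Plane :=
  {p | ∃ s : ℝ, ∀ x ≥ s, p ∈ connectedComponentIn Γᶜ ((x, 0) : Plane)}

/-- The relation `Γ₁ < Γ₂` on (essential, oriented from south to north) lines:
`Cl(L(Γ₁)) ⊆ L(Γ₂)`. -/
def lineLT (Γ₁ Γ₂ : Set Plane) : Prop := closure (Lset Γ₁) ⊆ Lset Γ₂

/-- An essential line in ℝ², oriented from south to north: a properly embedded copy of ℝ
whose second coordinate tends to ±∞ at ±∞. -/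
def IsEssLinePlane (Γ : ℝ → Plane) : Prop :=
  Continuous Γ ∧ Function.Injective Γ ∧ IsProperMap Γ ∧
    Tendsto (fun t => (Γ t).2) atTop atTop ∧ Tendsto (fun t => (Γ t).2) atBot atBot

/-- An essential line in the annulus 𝔸: a properly embedded simple path joining one end
to the other. -/
def IsEssLineAnn (γ : ℝ → Ann) : Prop :=
  Continuous γ ∧ Function.Injective γ ∧ IsProperMap γ ∧
    ((Tendsto (fun t => (γ t).2) atTop atTop ∧ Tendsto (fun t => (γ t).2) atBot atBot) ∨
     (Tendsto (fun t => (γ t).2) atTop atBot ∧ Tendsto (fun t => (γ t).2) atBot atTop))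

/-- An oriented essential line in 𝔸 joining the lower end S to the upper end N. -/
def IsEssLineAnnSN (γ : ℝ → Ann) : Prop :=
  Continuous γ ∧ Function.Injective γ ∧ IsProperMap γ ∧
    Tendsto (fun t => (γ t).2) atTop atTop ∧ Tendsto (fun t => (γ t).2) atBot atBot

/-- The weak rotation set of `F` relative to a compact set `K` of the annulus,
as a subset of [-∞,+∞]. -/
def RotWeakK (F : Plane → Plane) (K : Set Ann) : Set EReal :=
  {r | ∃ zs : ℕ → Plane, ∃ ns : ℕ → ℕ,
      (∀ k, prj (zs k) ∈ K) ∧ (∀ k, prj (F^[ns k] (zs k)) ∈ K) ∧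
      (∀ k, 0 < ns k) ∧ Tendsto ns atTop atTop ∧
      Tendsto (fun k => ((((F^[ns k] (zs k)).1 - (zs k).1) / (ns k : ℝ) : ℝ) : EReal))
        atTop (𝓝 r)}

/-- The weak rotation set of `F`: union of the `RotWeakK F K` over all compact `K ⊆ 𝔸`. -/
def RotWeak (F : Plane → Plane) : Set EReal :=
  ⋃ K ∈ {K : Set Ann | IsCompact K}, RotWeakK F K

/-- `K` separates the two ends of the annulus: no connected subset of its complement
accumulates on both ends. -/
def SeparatesEnds (K : Set Ann) : Prop :=
  ∀ C : Set Ann, C ⊆ Kᶜ → IsConnected C →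
    (∃ M : ℝ, ∀ z ∈ C, z.2 ≤ M) ∨ (∃ M : ℝ, ∀ z ∈ C, M ≤ z.2)

lemma deg_const {p : ℝ} [Fact (0 < p)] (H : ℝ × ℝ → AddCircle p) (hH : Continuous H)
    (hper : ∀ s t, H (s + 1, t) = H (s, t)) (a b : ℝ → ℝ) (ha : Continuous a) (hb : Continuous b)
    (h0 : ∀ s, (a s : AddCircle p) = H (s, 0)) (h1 : ∀ s, (b s : AddCircle p) = H (s, 1)) :
    a 1 - a 0 = b 1 - b 0 := by
  have hp : 0 < p := Fact.out
  have cov : IsCoveringMap ((↑) : ℝ → AddCircle p) := AddCircle.isCoveringMap_coe p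
  obtain ⟨L, ⟨-, hL⟩, -⟩ := cov.existsUnique_continuousMap_lifts ⟨H, hH⟩ (a₀ := (0, 0)) (e₀ := a 0)
    (h0 0)
  have hL' : ∀ q, ((L q : ℝ) : AddCircle p) = H q := fun q => congrFun hL q
  -- two lifts of same map differ by constant
  have key : ∀ u v : ℝ × ℝ → ℝ, Continuous u → Continuous v →
      (∀ q, ((u q : ℝ) : AddCircle p) = v q) → ∀ q q', u q - v q = u q' - v q' := by
    intro u v hu hv huv
    have hz : ∀ q, ∃ n : ℤ, (u q - v q) = n * p := by
      intro q
      have := huv q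
      rw [← sub_eq_zero, ← AddCircle.coe_sub, AddCircle.coe_eq_zero_iff] at this
      obtain ⟨n, hn⟩ := this
      exact ⟨n, by rw [← hn]; simp⟩
    choose n hn using hz
    have hc : Continuous n := by
      have h2 : Continuous (fun q => (n q : ℝ)) := by
        have : (fun q => (n q : ℝ)) = fun q => (u q - v q) / p := by
          ext q; rw [hn]; field_simp
        rw [this]; fun_prop
      exact Int.isClosedEmbedding_coe_real.isInducing.continuous_iff.2 h2
    intro q q'
    rw [hn, hn, PreconnectedSpace.constant inferInstance hc (x := q) (y := q')]
  have e1 := key L (fun q => L (q.1 + 1, q.2)) L.continuous (by fun_prop)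
    (by intro q; rw [hL', hL', hper]) (0, 0) (0, 1)
  have e2 := key (fun q => L (q.1, 0)) (fun q => a q.1) (by fun_prop) (by fun_prop)
    (by intro q; rw [hL', h0]) (0, 0) (1, 0)
  have e3 := key (fun q => L (q.1, 1)) (fun q => b q.1) (by fun_prop) (by fun_prop)
    (by intro q; rw [hL', h1]) (0, 0) (1, 0)
  simp only [zero_add] at e1 e2 e3
  linarith

lemma prj_cont : Continuous prj := by
  unfold prj
  exact ((AddCircle.continuous_mk' _).comp continuous_fst).prodMk continuous_snd

lemma prj_eq_iff (z w : Plane) : prj z = prj w ↔ ∃ n : ℤ, w = (z.1 + n, z.2) := by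
  constructor
  · intro h
    have h1 : ((w.1 : ℝ) : AddCircle (1 : ℝ)) = (z.1 : ℝ) := (congrArg (fun q : Ann => q.1) h).symm
    have h2 : z.2 = w.2 := congrArg (fun q : Ann => q.2) h
    rw [← sub_eq_zero, ← AddCircle.coe_sub, AddCircle.coe_eq_zero_iff] at h1
    obtain ⟨n, hn⟩ := h1
    simp at hn
    exact ⟨n, Prod.ext (by simp; linarith) h2.symm⟩
  · rintro ⟨n, rfl⟩
    unfold prj
    have : ((n : ℝ) : AddCircle (1 : ℝ)) = 0 := by
      rw [AddCircle.coe_eq_zero_iff]; exact ⟨n, by simp⟩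
    simp

lemma prj_openQuot : IsOpenQuotientMap prj := by
  refine ⟨?_, prj_cont, ?_⟩
  · rintro ⟨x, y⟩
    obtain ⟨c, rfl⟩ := QuotientAddGroup.mk_surjective x
    exact ⟨(c, y), rfl⟩
  · have h1 : IsOpenMap ((↑) : ℝ → AddCircle (1 : ℝ)) := QuotientAddGroup.isOpenMap_coe
    exact h1.prodMap IsOpenMap.id

instance annLPC : LocallyPathConnectedSpace Ann :=
  prj_openQuot.isQuotientMap.locallyPathConnectedSpace
instance annNorm : NormalSpace Ann := inferInstance

/-- A circle in the annulus whose angular degree is nonzero. -/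
def EssC (φ : C(AddCircle (1 : ℝ), Ann)) : Prop :=
  ∃ a : ℝ → ℝ, Continuous a ∧ (∀ s : ℝ, (a s : AddCircle (1 : ℝ)) = (φ (s : AddCircle (1 : ℝ))).1) ∧
    a 1 - a 0 ≠ 0

lemma coe_add_one (s : ℝ) : ((s + 1 : ℝ) : AddCircle (1 : ℝ)) = (s : AddCircle (1 : ℝ)) := by
  have := AddCircle.coe_add_period (1 : ℝ) s
  exact this

lemma EssC.not_null {φ : C(AddCircle (1 : ℝ), Ann)} (h : EssC φ) :
    ¬ ∃ pt : Ann, φ.Homotopic (ContinuousMap.const _ pt) := by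
  rintro ⟨pt, ⟨G⟩⟩
  obtain ⟨a, ha, hl, hne⟩ := h
  obtain ⟨c, hc⟩ := QuotientAddGroup.mk_surjective pt.1
  apply hne
  have := deg_const (p := 1)
    (fun q : ℝ × ℝ => (G (Set.projIcc 0 1 zero_le_one q.2, (q.1 : AddCircle (1 : ℝ)))).1) ?_ ?_ a
    (fun _ => c) ha continuous_const ?_ ?_
  · rw [this]; simp
  · have := AddCircle.continuous_mk' (1 : ℝ)
    have h3 : Continuous (fun q : ℝ × ℝ => (q.1 : AddCircle (1 : ℝ))) := this.comp continuous_fst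
    have h4 : Continuous (fun q : ℝ × ℝ => Set.projIcc (0 : ℝ) 1 zero_le_one q.2) :=
      continuous_projIcc.comp continuous_snd
    exact continuous_fst.comp (G.continuous.comp (h4.prodMk h3))
  · intro s t; simp only [coe_add_one]
  · intro s; simp [hl]
  · intro s; simp [← hc]

lemma bdd_of_compact {K : Set Ann} (hK : IsCompact K) : ∃ M : ℝ, 0 < M ∧ ∀ z ∈ K, |z.2| < M := by
  obtain ⟨C, hC⟩ := hK.exists_bound_of_continuousOn (f := fun z : Ann => z.2) (by fun_prop)
  refine ⟨|C| + 1, by positivity, fun z hz => ?_⟩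
  have := hC z hz
  rw [Real.norm_eq_abs] at this
  linarith [le_abs_self C]

lemma slab_compact (a b : ℝ) : IsCompact {z : Ann | a ≤ z.2 ∧ z.2 ≤ b} := by
  have : {z : Ann | a ≤ z.2 ∧ z.2 ≤ b} = (univ : Set (AddCircle (1 : ℝ))) ×ˢ Icc a b := by
    ext z; simp
  rw [this]
  exact isCompact_univ.prod isCompact_Icc

lemma low_conn (a : ℝ) : IsPreconnected {z : Ann | z.2 ≤ a} := by
  have : {z : Ann | z.2 ≤ a} = (univ : Set (AddCircle (1 : ℝ))) ×ˢ Iic a := by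
    ext z; simp
  rw [this]
  exact isPreconnected_univ.prod isPreconnected_Iic

lemma up_conn (a : ℝ) : IsPreconnected {z : Ann | a ≤ z.2} := by
  have : {z : Ann | a ≤ z.2} = (univ : Set (AddCircle (1 : ℝ))) ×ˢ Ici a := by
    ext z; simp
  rw [this]
  exact isPreconnected_univ.prod isPreconnected_Ici

/-- Component of the complement of `K` of the point at height `-R`. -/
def LC (K : Set Ann) (R : ℝ) : Set Ann := connectedComponentIn Kᶜ ((0 : AddCircle (1 : ℝ)), -R)

/-- Component of the complement of `K` of the point at height `R`. -/
def UC (K : Set Ann) (R : ℝ) : Set Ann := connectedComponentIn Kᶜ ((0 : AddCircle (1 : ℝ)), R)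

lemma low_sub_LC {K : Set Ann} {R : ℝ} (hR : ∀ z ∈ K, |z.2| < R) : {z : Ann | z.2 ≤ -R} ⊆ LC K R := by
  apply (low_conn (-R)).subset_connectedComponentIn
  · simp
  · intro z hz hzK
    have := hR z hzK
    rw [abs_lt] at this
    simp at hz; linarith

lemma up_sub_UC {K : Set Ann} {R : ℝ} (hR : ∀ z ∈ K, |z.2| < R) : {z : Ann | R ≤ z.2} ⊆ UC K R := by
  apply (up_conn (R)).subset_connectedComponentIn
  · simp
  · intro z hz hzK
    have := hR z hzK
    rw [abs_lt] at this
    simp at hz; linarith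

lemma comp_closure {K : Set Ann} (hK : IsClosed K) (p : Ann) :
    closure (connectedComponentIn Kᶜ p) ⊆ connectedComponentIn Kᶜ p ∪ K := by
  intro z hz
  by_cases hzK : z ∈ K
  · exact Or.inr hzK
  left
  have ho : IsOpen (connectedComponentIn Kᶜ z) := hK.isOpen_compl.connectedComponentIn
  have hm : z ∈ connectedComponentIn Kᶜ z := mem_connectedComponentIn hzK
  obtain ⟨w, hw1, hw2⟩ := mem_closure_iff.1 hz _ ho hm
  rw [connectedComponentIn_eq hw2, ← connectedComponentIn_eq hw1]
  exact hm

lemma LC_bdd {K : Set Ann} {R : ℝ} (hR : ∀ z ∈ K, |z.2| < R) (hs : SeparatesEnds K) :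
    ∃ M, ∀ z ∈ LC K R, z.2 ≤ M := by
  have hmem : ((0 : AddCircle (1 : ℝ)), -R) ∈ LC K R := low_sub_LC hR (by simp)
  rcases hs (LC K R) (connectedComponentIn_subset _ _)
    ⟨⟨_, hmem⟩, isPreconnected_connectedComponentIn⟩ with h | ⟨M, hM⟩
  · exact h
  · exfalso
    have h1 : ((0 : AddCircle (1 : ℝ)), min (-R) (M - 1)) ∈ LC K R := low_sub_LC hR (by simp)
    have := hM _ h1
    have h2 := min_le_right (-R) (M - 1)
    simp only at this
    linarith

lemma LC_UC_disj {K : Set Ann} {R : ℝ} (hR : ∀ z ∈ K, |z.2| < R) (hs : SeparatesEnds K) :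
    Disjoint (LC K R) (UC K R) := by
  rw [Set.disjoint_left]
  intro z h1 h2
  have e : LC K R = UC K R := by
    unfold LC UC at *
    rw [connectedComponentIn_eq h1, connectedComponentIn_eq h2]
  obtain ⟨M, hM⟩ := LC_bdd hR hs
  have h3 : ((0 : AddCircle (1 : ℝ)), max R (M + 1)) ∈ LC K R := by
    rw [e]; exact up_sub_UC hR (by simp)
  have := hM _ h3
  have h4 := le_max_right R (M + 1)
  simp only at this
  linarith

lemma sep_no_height {K : Set Ann} (hK : IsCompact K) (hs : SeparatesEnds K) (h : Plane → ℤ)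
    (hc : ContinuousOn h (prj ⁻¹' K)) (hT : ∀ z ∈ prj ⁻¹' K, h (z.1 + 1, z.2) = h z + 1) : False := by
  have hTn : ∀ z ∈ prj ⁻¹' K, ∀ n : ℕ, h (z.1 + n, z.2) = h z + n := by
    intro z hz n
    induction n with
    | zero => simp
    | succ n ih =>
      have hm : ((z.1 + n, z.2) : Plane) ∈ prj ⁻¹' K := by
        have : prj (z.1 + n, z.2) = prj z := ((prj_eq_iff _ _).2 ⟨n, by simp⟩).symm
        simpa [this] using hz
      have := hT _ hm
      simp only at this
      push_cast
      rw [← add_assoc, this, ih]; ring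
  have hinv : ∀ z ∈ prj ⁻¹' K, ∀ w, prj z = prj w → z.1 - h z = w.1 - h w := by
    have main : ∀ z ∈ prj ⁻¹' K, ∀ w, ∀ n : ℕ, z.2 = w.2 → w.1 = z.1 + n → z.1 - h z = w.1 - h w := by
      intro z hz w n h2 h1
      have e : w = (z.1 + n, z.2) := Prod.ext h1 h2.symm
      rw [e, hTn z hz n]; push_cast; ring
    intro z hz w hzw
    obtain ⟨n, hn⟩ := (prj_eq_iff _ _).1 hzw
    have hz2 : z.2 = w.2 := by rw [hn]
    replace hn : w.1 = z.1 + n := by rw [hn]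
    rcases Int.eq_nat_or_neg n with ⟨k, rfl | rfl⟩
    · exact main z hz w k hz2 (by push_cast at hn; linarith)
    · exact (main w (by simpa [← hzw] using hz) z k hz2.symm (by push_cast at hn; linarith)).symm
  -- descend
  choose s hsec using prj_openQuot.surjective
  let g : K → ℝ := fun z => (s z).1 - h (s z)
  have hg : Continuous g := by
    have hq : IsQuotientMap (K.restrictPreimage prj) :=
      (prj_openQuot.restrictPreimage K).isQuotientMap
    rw [hq.continuous_iff]
    have : g ∘ K.restrictPreimage prj = fun z : prj ⁻¹' K => (z : Plane).1 - (h z : ℝ) := by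
      ext z
      simp only [g, Function.comp]
      refine (hinv z z.2 _ ?_).symm
      rw [hsec]; rfl
    rw [this]
    have h1 : Continuous (fun z : prj ⁻¹' K => h z) := continuousOn_iff_continuous_domRestrict.1 hc
    have h2 : Continuous (fun n : ℤ => (n : ℝ)) := continuous_of_discreteTopology
    exact (continuous_fst.comp continuous_subtype_val).sub (h2.comp h1)
  have hgl : ∀ z : K, ((g z : ℝ) : AddCircle (1 : ℝ)) = (z : Ann).1 := by
    intro z
    simp only [g, AddCircle.coe_sub]
    have h1 : ((h (s z) : ℝ) : AddCircle (1 : ℝ)) = 0 := by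
      rw [AddCircle.coe_eq_zero_iff]; exact ⟨h (s z), by simp⟩
    rw [h1, sub_zero]
    exact congrArg Prod.fst (hsec z)
  obtain ⟨G, hG⟩ := ContinuousMap.exists_restrict_eq hK.isClosed (⟨g, hg⟩ : C(K, ℝ))
  have hG' : ∀ z (hz : z ∈ K), G z = g ⟨z, hz⟩ := fun z hz => DFunLike.congr_fun hG ⟨z, hz⟩
  obtain ⟨R, hR0, hR⟩ := bdd_of_compact hK
  obtain ⟨M, hM⟩ := LC_bdd hR hs
  classical
  let u : Ann → AddCircle (1 : ℝ) := fun z => if z ∈ LC K R then z.1 else ((G z : ℝ) : AddCircle (1 : ℝ))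
  have hmk := AddCircle.continuous_mk' (1 : ℝ)
  have hu : Continuous u := by
    refine Continuous.if ?_ continuous_fst (hmk.comp G.continuous)
    intro a ha
    have hop : IsOpen (LC K R) := hK.isClosed.isOpen_compl.connectedComponentIn
    have haf : a ∈ frontier (LC K R) := ha
    rw [hop.frontier_eq] at haf
    have haK : a ∈ K := (comp_closure hK.isClosed _ haf.1).resolve_left haf.2
    rw [hG' a haK]
    exact (hgl ⟨a, haK⟩).symm
  have hd := deg_const (p := 1)
    (fun q : ℝ × ℝ => u ((q.1 : AddCircle (1 : ℝ)), (1 - q.2) * (-R) + q.2 * (M + 1))) ?_ ?_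
    (fun s => s) (fun s => G ((s : AddCircle (1 : ℝ)), M + 1)) continuous_id ?_ ?_ ?_
  · have e : (((1 : ℝ) : AddCircle (1 : ℝ))) = ((0 : ℝ) : AddCircle (1 : ℝ)) := by
      simp
    rw [e] at hd
    norm_num at hd
  · exact hu.comp ((hmk.comp continuous_fst).prodMk (by fun_prop))
  · intro s t; simp only [coe_add_one]
  · exact G.continuous.comp (hmk.prodMk continuous_const)
  · intro s
    simp only [u]
    rw [if_pos]
    apply low_sub_LC hR
    simp
  · intro s
    simp only [u]
    rw [if_neg]
    · simp
    · intro hmem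
      have := hM _ hmem
      simp at this
      linarith

/-- Grid vertices close to (the lift of) `K`. -/
def Good (K : Set Ann) (m : ℕ) (v : ℤ × ℤ) : Prop :=
  ∃ z : Plane, prj z ∈ K ∧ |(m : ℝ) * z.1 - v.1| ≤ 2 ∧ |(m : ℝ) * z.2 - v.2| ≤ 2

/-- Grid adjacency. -/
def GAdj (v w : ℤ × ℤ) : Prop :=
  (w.1 = v.1 ∧ (w.2 = v.2 + 1 ∨ w.2 = v.2 - 1)) ∨ (w.2 = v.2 ∧ (w.1 = v.1 + 1 ∨ w.1 = v.1 - 1))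

/-- Adjacency of good vertices. -/
def Rl (K : Set Ann) (m : ℕ) (v w : ℤ × ℤ) : Prop := Good K m v ∧ Good K m w ∧ GAdj v w

/-- Translation of grid vertices. -/
def sh (m : ℕ) (k : ℤ) (v : ℤ × ℤ) : ℤ × ℤ := (v.1 + k * m, v.2)

lemma sh_sh (m : ℕ) (k l : ℤ) (v) : sh m k (sh m l v) = sh m (l + k) v := by
  simp [sh]; ring

lemma Good.sh {K : Set Ann} {m : ℕ} {v} (k : ℤ) (h : Good K m v) : Good K m (sh m k v) := by
  obtain ⟨z, hz, h1, h2⟩ := h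
  refine ⟨(z.1 + k, z.2), ?_, ?_, h2⟩
  · rwa [← (prj_eq_iff z _).2 ⟨k, rfl⟩]
  · simp only [_root_.sh]; push_cast
    convert h1 using 2; ring

lemma Rl.sh {K : Set Ann} {m : ℕ} {v w} (k : ℤ) (h : Rl K m v w) :
    Rl K m (sh m k v) (sh m k w) := by
  refine ⟨h.1.sh k, h.2.1.sh k, ?_⟩
  have := h.2.2
  simp only [GAdj, _root_.sh] at *
  omega

lemma Rl.symm {K : Set Ann} {m : ℕ} {v w} (h : Rl K m v w) : Rl K m w v := by
  refine ⟨h.2.1, h.1, ?_⟩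
  have := h.2.2
  simp only [GAdj] at *
  omega

lemma grid_path {K : Set Ann} (hK : IsCompact K) (hs : SeparatesEnds K) (m : ℕ) (hm : 0 < m) :
    ∃ v, ∃ k : ℤ, k ≠ 0 ∧ Relation.ReflTransGen (Rl K m) v (sh m k v) := by
  by_contra hcon
  push Not at hcon
  have hfree : ∀ v k, Relation.ReflTransGen (Rl K m) v (sh m k v) → k = 0 := by
    intro v k h
    by_contra hk
    exact hcon v k hk h
  have hsym : ∀ {v w}, Relation.ReflTransGen (Rl K m) v w → Relation.ReflTransGen (Rl K m) w v := by
    intro v w h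
    induction h with
    | refl => exact .refl
    | tail _ h ih => exact .head h.symm ih
  have hsh : ∀ {v w} k, Relation.ReflTransGen (Rl K m) v w →
      Relation.ReflTransGen (Rl K m) (sh m k v) (sh m k w) := by
    intro v w k h
    exact Relation.ReflTransGen.lift _ (fun a b h => h.sh k) _ _ h
  let S : Setoid (ℤ × ℤ) :=
    { r := fun v w => ∃ k, Relation.ReflTransGen (Rl K m) v (sh m k w)
      iseqv :=
        { refl := fun v => ⟨0, by simp [sh]; exact .refl⟩
          symm := by
            rintro v w ⟨k, h⟩
            refine ⟨-k, ?_⟩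
            have := hsh (-k) (hsym h)
            rw [sh_sh] at this
            simpa [sh] using this
          trans := by
            rintro u v w ⟨k, h⟩ ⟨l, h'⟩
            refine ⟨l + k, h.trans ?_⟩
            have := hsh k h'
            rwa [sh_sh] at this } }
  let rep : ℤ × ℤ → ℤ × ℤ := fun v => (Quotient.mk S v).out
  have hrep : ∀ v, ∃ k, Relation.ReflTransGen (Rl K m) v (sh m k (rep v)) := fun v =>
    S.symm (Quotient.mk_out (s := S) v)
  choose κ hκ using hrep
  have hκ1 : ∀ v w k, Relation.ReflTransGen (Rl K m) v (sh m k w) → κ v = κ w + k := by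
    intro v w k h
    have e : rep v = rep w := by
      have : Quotient.mk S v = Quotient.mk S w := Quotient.sound (s := S) ⟨k, h⟩
      simp only [rep, this]
    have h1 := (hsym (hκ v)).trans (h.trans (hsh k (hκ w)))
    rw [sh_sh, e] at h1
    have h2 := hfree (sh m (κ v) (rep w)) (κ w + k - κ v) (by
      rw [sh_sh]; convert h1 using 2; ring)
    omega
  -- height
  let fl : Plane → ℤ × ℤ := fun z => (⌊(m : ℝ) * z.1⌋, ⌊(m : ℝ) * z.2⌋)
  have hm' : (0 : ℝ) < m := by exact_mod_cast hm
  refine sep_no_height hK hs (fun z => κ (fl z)) ?_ ?_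
  · intro z hz
    have hnear : ∀ w, prj w ∈ K → dist w z < 1 / m →
        Relation.ReflTransGen (Rl K m) (fl w) (fl z) := by
      intro w hw hd
      rw [Prod.dist_eq, max_lt_iff, Real.dist_eq, Real.dist_eq] at hd
      have d1 : |(m : ℝ) * w.1 - m * z.1| < 1 := by
        rw [← mul_sub, abs_mul, abs_of_pos hm']
        have := mul_lt_mul_of_pos_left hd.1 hm'
        rwa [mul_one_div_cancel hm'.ne'] at this
      have d2 : |(m : ℝ) * w.2 - m * z.2| < 1 := by
        rw [← mul_sub, abs_mul, abs_of_pos hm']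
        have := mul_lt_mul_of_pos_left hd.2 hm'
        rwa [mul_one_div_cancel hm'.ne'] at this
      have f1 := Int.floor_le ((m : ℝ) * w.1)
      have f2 := Int.lt_floor_add_one ((m : ℝ) * w.1)
      have f3 := Int.floor_le ((m : ℝ) * w.2)
      have f4 := Int.lt_floor_add_one ((m : ℝ) * w.2)
      have f5 := Int.floor_le ((m : ℝ) * z.1)
      have f6 := Int.lt_floor_add_one ((m : ℝ) * z.1)
      have f7 := Int.floor_le ((m : ℝ) * z.2)
      have f8 := Int.lt_floor_add_one ((m : ℝ) * z.2)
      rw [abs_lt] at d1 d2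
      have g1 : Good K m (fl w) :=
        ⟨w, hw, by simp only [fl]; rw [abs_le]; constructor <;> linarith,
          by simp only [fl]; rw [abs_le]; constructor <;> linarith⟩
      have g2 : Good K m (fl z) :=
        ⟨z, hz, by simp only [fl]; rw [abs_le]; constructor <;> linarith,
          by simp only [fl]; rw [abs_le]; constructor <;> linarith⟩
      have g3 : Good K m ((fl w).1, (fl z).2) :=
        ⟨w, hw, by simp only [fl]; rw [abs_le]; constructor <;> linarith,
          by simp only [fl]; rw [abs_le]; constructor <;> linarith⟩
      have i1 : (fl w).1 < (fl z).1 + 2 := by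
        have : ((fl w).1 : ℝ) < (fl z).1 + 2 := by simp only [fl]; linarith
        exact_mod_cast this
      have i2 : (fl z).1 < (fl w).1 + 2 := by
        have : ((fl z).1 : ℝ) < (fl w).1 + 2 := by simp only [fl]; linarith
        exact_mod_cast this
      have i3 : (fl w).2 < (fl z).2 + 2 := by
        have : ((fl w).2 : ℝ) < (fl z).2 + 2 := by simp only [fl]; linarith
        exact_mod_cast this
      have i4 : (fl z).2 < (fl w).2 + 2 := by
        have : ((fl z).2 : ℝ) < (fl w).2 + 2 := by simp only [fl]; linarith
        exact_mod_cast this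
      have s1 : Relation.ReflTransGen (Rl K m) (fl w) ((fl w).1, (fl z).2) := by
        by_cases h : (fl z).2 = (fl w).2
        · rw [h]
        · exact .single ⟨g1, g3, Or.inl ⟨rfl, (by omega : (fl z).2 = (fl w).2 + 1 ∨ (fl z).2 = (fl w).2 - 1)⟩⟩
      have s2 : Relation.ReflTransGen (Rl K m) ((fl w).1, (fl z).2) (fl z) := by
        by_cases h : (fl z).1 = (fl w).1
        · rw [← h]
        · exact .single ⟨g3, g2, Or.inr ⟨rfl, (by omega : (fl z).1 = (fl w).1 + 1 ∨ (fl z).1 = (fl w).1 - 1)⟩⟩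
      exact s1.trans s2
    have : (fun z => κ (fl z)) =ᶠ[𝓝[prj ⁻¹' K] z] fun _ => κ (fl z) := by
      rw [Filter.EventuallyEq, eventually_nhdsWithin_iff]
      filter_upwards [Metric.ball_mem_nhds z (one_div_pos.2 hm')] with w hw hwK
      have := hκ1 _ _ 0 (by simpa [sh] using hnear w hwK hw)
      simpa using this
    exact (continuousWithinAt_const (b := κ (fl z))).congr_of_eventuallyEq this rfl
  · intro z hz
    have : fl (z.1 + 1, z.2) = sh m 1 (fl z) := by
      simp only [fl, sh, mul_add, mul_one, one_mul]
      rw [Int.floor_add_natCast]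
    simp only [this]
    exact hκ1 _ _ 1 .refl

lemma path_seq {α : Type*} {r : α → α → Prop} {v w : α} (h : Relation.ReflTransGen r v w) :
    ∃ n : ℕ, ∃ p : ℕ → α, p 0 = v ∧ p n = w ∧ ∀ i < n, r (p i) (p (i + 1)) := by
  induction h with
  | refl => exact ⟨0, fun _ => v, rfl, rfl, by simp⟩
  | @tail b c _ hbc ih =>
    obtain ⟨n, p, h0, hn, hp⟩ := ih
    refine ⟨n + 1, fun i => if i ≤ n then p i else c, by simp [h0], by simp, ?_⟩
    intro i hi
    by_cases h : i < n
    · simp only [h.le, if_true, Nat.succ_le_of_lt h]; exact hp i h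
    · have : i = n := by omega
      subst this
      simpa [hn] using hbc

lemma exists_P {K : Set Ann} (hK : IsCompact K) (hs : SeparatesEnds K) (m : ℕ) (hm : 3 ≤ m) :
    ∃ n : ℕ, 3 ≤ n ∧ ∃ P : ℤ → ℤ × ℤ, ∃ k : ℤ, k ≠ 0 ∧ (∀ i, Rl K m (P i) (P (i + 1))) ∧
      (∀ i, P (i + n) = sh m k (P i)) ∧
      (∀ i j l, P i = sh m l (P j) → (n : ℤ) ∣ i - j) := by
  classical
  have hex : ∃ n : ℕ, ∃ p : ℕ → ℤ × ℤ, ∃ k : ℤ, k ≠ 0 ∧ p n = sh m k (p 0) ∧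
      ∀ i < n, Rl K m (p i) (p (i + 1)) := by
    obtain ⟨v, k, hk, h⟩ := grid_path hK hs m (by omega)
    obtain ⟨n, p, h0, hn, hp⟩ := path_seq h
    exact ⟨n, p, k, hk, by rw [hn, h0], hp⟩
  obtain ⟨p, k, hk, hpn, hp⟩ := Nat.find_spec hex
  have hmin := fun n' => Nat.find_min (m := n') hex
  set n := Nat.find hex with hn
  clear_value n
  have hdist : ∀ i ≤ n, |(p i).1 - (p 0).1| ≤ i := by
    intro i
    induction i with
    | zero => simp
    | succ i ih =>
      intro hi
      have h1 := ih (by omega)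
      have h2 := (hp i (by omega)).2.2
      simp only [GAdj] at h2
      rw [abs_le] at *
      push_cast
      omega
  have hn3 : 3 ≤ n := by
    have h1 := hdist n le_rfl
    rw [hpn] at h1
    simp only [sh, add_sub_cancel_left, abs_mul, Nat.abs_cast] at h1
    have h2 : 1 ≤ |k| := Int.one_le_abs hk
    have h3 : (3 : ℤ) ≤ m := by exact_mod_cast hm
    have : (3 : ℤ) ≤ n := by nlinarith
    exact_mod_cast this
  have hlt : ∀ i j, i < j → j < n → ∀ l, p j ≠ sh m l (p i) := by
    intro i j hij hj l he
    by_cases hl : l = 0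
    · subst hl
      have he' : p j = p i := by rw [he]; simp [sh]
      apply hmin (n - (j - i)) (by omega)
      refine ⟨fun t => if t ≤ i then p t else p (t + (j - i)), k, hk, ?_, ?_⟩
      · have : ¬ (n - (j - i) ≤ i) := by omega
        simp only [this, if_false, Nat.zero_le, if_true]
        rw [show n - (j - i) + (j - i) = n by omega, hpn]
      · intro t ht
        rcases lt_trichotomy t i with h | h | h
        · simp only [h.le, if_true, Nat.succ_le_of_lt h]
          exact hp t (by omega)
        · subst h
          simp only [le_rfl, if_true, Nat.not_succ_le_self, if_false]
          rw [← he', show t + 1 + (j - t) = j + 1 by omega]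
          exact hp j hj
        · have h1 : ¬ t ≤ i := by omega
          have h2 : ¬ t + 1 ≤ i := by omega
          simp only [h1, h2, if_false]
          rw [show t + 1 + (j - i) = t + (j - i) + 1 by omega]
          exact hp _ (by omega)
    · apply hmin (j - i) (by omega)
      refine ⟨fun t => p (i + t), l, hl, ?_, ?_⟩
      · simp only [add_zero]; rw [show i + (j - i) = j by omega, he]
      · intro t ht
        exact hp (i + t) (by omega)
  have hinj : ∀ i j l, i < n → j < n → p i = sh m l (p j) → i = j := by
    intro i j l hi hj he
    rcases lt_trichotomy i j with h | h | h
    · exact absurd (by rw [he, sh_sh]; simp [sh]) (hlt i j h hj (-l))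
    · exact h
    · exact absurd he (hlt j i h hi l)
  have hn0 : (0 : ℤ) < n := by omega
  let P : ℤ → ℤ × ℤ := fun i => sh m (k * (i / n)) (p (i % n).toNat)
  have hP : ∀ (q : ℤ) (r : ℕ), r ≤ n → P (n * q + r) = sh m (k * q) (p r) := by
    intro q r hr
    rcases hr.lt_or_eq with h | h
    · have e1 : ((n : ℤ) * q + r) / n = q := by
        rw [Int.mul_add_ediv_left _ _ hn0.ne', Int.ediv_eq_zero_of_lt (by omega) (by omega), add_zero]
      have e2 : ((n : ℤ) * q + r) % n = r := by
        rw [Int.mul_add_emod_self_left, Int.emod_eq_of_lt (by omega) (by omega)]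
      simp only [P, e1, e2, Int.toNat_natCast]
    · subst h
      have e1 : ((r : ℤ) * q + r) = r * (q + 1) := by ring
      have e2 : ((r : ℤ) * (q + 1)) / r = q + 1 := Int.mul_ediv_cancel_left _ hn0.ne'
      have e3 : ((r : ℤ) * (q + 1)) % r = 0 := Int.mul_emod_right _ _
      simp only [P, e1, e2, e3, Int.toNat_zero]
      rw [hpn, sh_sh]; congr 1; ring
  have hrep : ∀ i : ℤ, ∃ q : ℤ, ∃ r : ℕ, r < n ∧ i = n * q + r := by
    intro i
    refine ⟨i / n, (i % n).toNat, ?_, ?_⟩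
    · have := Int.emod_lt_of_pos i hn0
      omega
    · rw [Int.toNat_of_nonneg (Int.emod_nonneg _ hn0.ne'), Int.mul_ediv_add_emod]
  refine ⟨n, hn3, P, k, hk, ?_, ?_, ?_⟩
  · intro i
    obtain ⟨q, r, hr, rfl⟩ := hrep i
    have := hP q (r + 1) (by omega)
    push_cast at this
    rw [add_assoc, this, hP q r hr.le]
    exact (hp r hr).sh _
  · intro i
    obtain ⟨q, r, hr, rfl⟩ := hrep i
    have := hP (q + 1) r hr.le
    rw [show (n : ℤ) * q + r + n = n * (q + 1) + r by ring, this, hP q r hr.le, sh_sh]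
    congr 1; ring
  · intro i j l he
    obtain ⟨q, r, hr, rfl⟩ := hrep i
    obtain ⟨q', r', hr', rfl⟩ := hrep j
    rw [hP q r hr.le, hP q' r' hr'.le] at he
    have he2 : p r = sh m (k * q' + l - k * q) (p r') := by
      have := congrArg (sh m (-(k * q))) he
      rw [sh_sh, sh_sh, sh_sh] at this
      simp only [add_neg_cancel] at this
      rw [show p r = sh m 0 (p r) by simp [sh], this]
      congr 1; ring
    have := hinj r r' _ hr hr' he2
    subst this
    exact ⟨q - q', by ring⟩

/-- Piecewise linear interpolation. -/
def pl (u : ℤ → ℝ) (t : ℝ) : ℝ := u ⌊t⌋ + Int.fract t * (u (⌊t⌋ + 1) - u ⌊t⌋)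

lemma pl_cont (u : ℤ → ℝ) : Continuous (pl u) := by
  rw [continuous_iff_continuousAt]
  intro t
  set i := ⌊t⌋ with hi
  have h : pl u =ᶠ[𝓝 t] fun s => u i + max (s - i) 0 * (u (i + 1) - u i)
      + min (s - i) 0 * (u i - u (i - 1)) := by
    have h1 : (i : ℝ) ≤ t := Int.floor_le t
    have h2 : t < i + 1 := Int.lt_floor_add_one t
    filter_upwards [Ioo_mem_nhds (show (i : ℝ) - 1 < t by linarith) h2] with s hs
    by_cases hsi : (i : ℝ) ≤ s
    · have : ⌊s⌋ = i := Int.floor_eq_iff.2 ⟨hsi, hs.2⟩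
      rw [pl, Int.fract, this, max_eq_left (by linarith), min_eq_right (by linarith)]
      ring
    · have : ⌊s⌋ = i - 1 := Int.floor_eq_iff.2 ⟨by push_cast; linarith [hs.1], by push_cast; linarith⟩
      rw [pl, Int.fract, this, max_eq_right (by linarith), min_eq_left (by linarith)]
      push_cast
      rw [sub_add_cancel]
      ring
  refine ContinuousAt.congr ?_ h.symm
  apply Continuous.continuousAt
  fun_prop

lemma pl_add (u : ℤ → ℝ) (n : ℕ) (c : ℝ) (h : ∀ i, u (i + n) = u i + c) (t : ℝ) :
    pl u (t + n) = pl u t + c := by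
  simp only [pl, Int.floor_add_natCast, Int.fract_add_natCast]
  rw [h, show ⌊t⌋ + (n : ℤ) + 1 = ⌊t⌋ + 1 + n by ring, h]
  ring

lemma edge_lemma (v v1 w w1 : ℤ × ℤ) (h : GAdj v v1) (h' : GAdj w w1) (L : ℤ) (σ τ : ℝ)
    (hσ : 0 ≤ σ) (hσ' : σ < 1) (hτ : 0 ≤ τ) (hτ' : τ < 1)
    (e1 : (v.1 : ℝ) + σ * (v1.1 - v.1) = w.1 + τ * (w1.1 - w.1) + L)
    (e2 : (v.2 : ℝ) + σ * (v1.2 - v.2) = w.2 + τ * (w1.2 - w.2)) :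
    (σ = τ ∧ v.1 = w.1 + L ∧ v.2 = w.2) ∨
      (v1.1 = w.1 + L ∧ v1.2 = w.2 ∧ v.1 = w1.1 + L ∧ v.2 = w1.2) := by
  obtain ⟨a, b⟩ := v
  obtain ⟨a1, b1⟩ := v1
  obtain ⟨c, d⟩ := w
  obtain ⟨c1, d1⟩ := w1
  simp only [GAdj] at *
  obtain ⟨N1, hN1⟩ : ∃ N1 : ℤ, a = c + L + N1 := ⟨a - c - L, by ring⟩
  obtain ⟨N2, hN2⟩ : ∃ N2 : ℤ, b = d + N2 := ⟨b - d, by ring⟩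
  rcases h with ⟨h1, h2 | h2⟩ | ⟨h1, h2 | h2⟩ <;> rcases h' with ⟨h3, h4 | h4⟩ | ⟨h3, h4 | h4⟩ <;>
  · subst h1 h2 h3 h4 hN1 hN2
    push_cast at e1 e2
    have b1 : -2 < N1 := by
      have : (-2 : ℝ) < N1 := by linarith
      exact_mod_cast this
    have b2 : N1 < 2 := by
      have : (N1 : ℝ) < 2 := by linarith
      exact_mod_cast this
    have b3 : -2 < N2 := by
      have : (-2 : ℝ) < N2 := by linarith
      exact_mod_cast this
    have b4 : N2 < 2 := by
      have : (N2 : ℝ) < 2 := by linarith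
      exact_mod_cast this
    obtain rfl | rfl | rfl : N1 = -1 ∨ N1 = 0 ∨ N1 = 1 := by omega
    all_goals obtain rfl | rfl | rfl : N2 = -1 ∨ N2 = 0 ∨ N2 = 1 := by omega
    all_goals push_cast at e1 e2
    all_goals first
      | (exfalso; linarith)
      | (left; refine ⟨by linarith, by omega, by omega⟩)
      | (right; refine ⟨by omega, by omega, by omega, by omega⟩)

lemma dist_prj_le (z w : Plane) : dist (prj z) (prj w) ≤ dist z w := by
  rw [Prod.dist_eq, Prod.dist_eq]
  refine max_le_max ?_ le_rfl
  simp only [prj]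
  rw [dist_eq_norm, dist_eq_norm, ← AddCircle.coe_sub]
  exact QuotientAddGroup.norm_mk_le_norm

lemma exists_circle {K O : Set Ann} (hK : IsCompact K) (hs : SeparatesEnds K) (hO : IsOpen O)
    (hKO : K ⊆ O) :
    ∃ φ : C(AddCircle (1 : ℝ), Ann), Function.Injective φ ∧ range φ ⊆ O ∧ EssC φ := by
  obtain ⟨δ, hδ, hth⟩ := hK.exists_thickening_subset_open hO hKO
  obtain ⟨m0, hm0⟩ := exists_nat_gt (3 / δ)
  let m := max m0 3
  have hm3 : 3 ≤ m := le_max_right _ _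
  have hmδ : 3 / δ < m := hm0.trans_le (by exact_mod_cast le_max_left m0 3)
  clear_value m
  have hm' : (0 : ℝ) < m := by
    have : 0 < m := by omega
    exact_mod_cast this
  rw [div_lt_iff₀ hδ] at hmδ
  obtain ⟨n, hn3, P, k, hk, hR, hper, hinj⟩ := exists_P hK hs m hm3
  have hn' : (0 : ℝ) < n := by
    have : 0 < n := by omega
    exact_mod_cast this
  let X : ℝ → ℝ := pl (fun i => ((P i).1 : ℝ))
  let Y : ℝ → ℝ := pl (fun i => ((P i).2 : ℝ))
  have hXc : Continuous X := pl_cont _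
  have hYc : Continuous Y := pl_cont _
  have hX : ∀ t, X (t + n) = X t + k * m := by
    refine pl_add _ n _ ?_
    intro i; simp only [hper, sh]; push_cast; ring
  have hY : ∀ t, Y (t + n) = Y t := by
    intro t
    have := pl_add (fun i => ((P i).2 : ℝ)) n 0 (by intro i; simp only [hper, sh]; simp) t
    simpa using this
  have hXY : ∀ s t (l : ℤ), X s = X t + l * m → Y s = Y t → ∃ q : ℤ, s - t = n * q := by
    intro s t l h1 h2
    have hs := Int.floor_add_fract s
    have ht := Int.floor_add_fract t
    rcases edge_lemma (P ⌊s⌋) (P (⌊s⌋ + 1)) (P ⌊t⌋) (P (⌊t⌋ + 1)) (hR _).2.2 (hR _).2.2 (l * m)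
      (Int.fract s) (Int.fract t) (Int.fract_nonneg _) (Int.fract_lt_one _) (Int.fract_nonneg _)
      (Int.fract_lt_one _) (by simpa [X, pl] using h1) (by simpa [Y, pl] using h2) with h | h
    · obtain ⟨h3, h4, h5⟩ := h
      obtain ⟨q, hq⟩ := hinj ⌊s⌋ ⌊t⌋ l (Prod.ext h4 h5)
      refine ⟨q, ?_⟩
      have : ((⌊s⌋ : ℝ) - ⌊t⌋) = n * q := by exact_mod_cast hq
      linarith
    · obtain ⟨h3, h4, h5, h6⟩ := h
      have d1 := hinj (⌊s⌋ + 1) ⌊t⌋ l (Prod.ext h3 h4)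
      have d2 := hinj ⌊s⌋ (⌊t⌋ + 1) l (Prod.ext h5 h6)
      have d3 := dvd_sub d1 d2
      rw [show ⌊s⌋ + 1 - ⌊t⌋ - (⌊s⌋ - (⌊t⌋ + 1)) = 2 by ring] at d3
      have := Int.le_of_dvd (by norm_num) d3
      omega
  let Φ : ℝ → Ann := fun t => prj (X (n * t) / m, Y (n * t) / m)
  have hΦc : Continuous Φ := prj_cont.comp (by fun_prop)
  have hΦp : Function.Periodic Φ 1 := by
    intro t
    simp only [Φ]
    symm
    rw [prj_eq_iff]
    refine ⟨k, ?_⟩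
    rw [mul_add, mul_one, hX, hY]
    ext
    · simp; field_simp
    · simp
  let φ : C(AddCircle (1 : ℝ), Ann) := ⟨hΦp.lift, by
    rw [(QuotientAddGroup.isQuotientMap_mk (AddSubgroup.zmultiples (1 : ℝ))).continuous_iff]
    exact hΦc⟩
  have hφ : ∀ t : ℝ, φ (t : AddCircle (1 : ℝ)) = Φ t := fun t => rfl
  refine ⟨φ, ?_, ?_, ?_⟩
  · intro x y hxy
    obtain ⟨s, rfl⟩ := QuotientAddGroup.mk_surjective x
    obtain ⟨t, rfl⟩ := QuotientAddGroup.mk_surjective y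
    have h : Φ s = Φ t := hxy
    obtain ⟨l, hl⟩ := (prj_eq_iff _ _).1 h
    rw [Prod.ext_iff] at hl
    obtain ⟨h1, h2⟩ := hl
    simp only at h1 h2
    have h1' : X (n * t) = X (n * s) + l * m := by
      field_simp at h1; linarith
    have h2' : Y (n * t) = Y (n * s) := by
      field_simp at h2; linarith
    obtain ⟨q, hq⟩ := hXY _ _ l h1' h2'
    have hts : t = s + q := by
      have : (n : ℝ) * (t - s - q) = 0 := by linarith
      rcases mul_eq_zero.1 this with h | h
      · linarith
      · linarith
    have e : prj (s, 0) = prj (t, 0) := (prj_eq_iff _ _).2 ⟨q, by rw [hts]⟩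
    exact congrArg (fun z : Ann => z.1) e
  · rintro _ ⟨x, rfl⟩
    obtain ⟨t, rfl⟩ := QuotientAddGroup.mk_surjective x
    apply hth
    rw [Metric.mem_thickening_iff]
    set i := ⌊(n : ℝ) * t⌋ with hi
    obtain ⟨z, hz, z1, z2⟩ := (hR i).1
    refine ⟨prj z, hz, ?_⟩
    have hadj := (hR i).2.2
    refine lt_of_le_of_lt (dist_prj_le _ _) ?_
    have f0 := Int.fract_nonneg ((n : ℝ) * t)
    have f1 := Int.fract_lt_one ((n : ℝ) * t)
    have key : |X (n * t) - (P i).1| ≤ 1 ∧ |Y (n * t) - (P i).2| ≤ 1 := by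
      have eX : X (n * t) - (P i).1 = Int.fract ((n : ℝ) * t) * ((P (i + 1)).1 - (P i).1) := by
        simp [X, pl, ← hi]
      have eY : Y (n * t) - (P i).2 = Int.fract ((n : ℝ) * t) * ((P (i + 1)).2 - (P i).2) := by
        simp [Y, pl, ← hi]
      rw [eX, eY]
      rcases hadj with ⟨h1, h2 | h2⟩ | ⟨h1, h2 | h2⟩ <;> rw [h1, h2] <;> push_cast <;>
        rw [abs_le, abs_le] <;> refine ⟨⟨?_, ?_⟩, ?_, ?_⟩ <;> nlinarith
    have aux : ∀ a b c : ℝ, |a - b| ≤ 1 → |(m : ℝ) * c - b| ≤ 2 → |a / m - c| < δ := by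
      intro a b c h1 h2
      have : a / m - c = (a - m * c) / m := by field_simp
      rw [this, abs_div, abs_of_pos hm', div_lt_iff₀ hm']
      have : |a - m * c| ≤ 3 := by
        rw [abs_le] at *
        constructor <;> linarith
      linarith
    rw [Prod.dist_eq, Real.dist_eq, Real.dist_eq]
    exact max_lt (aux _ _ _ key.1 z1) (aux _ _ _ key.2 z2)
  · refine ⟨fun t => X (n * t) / m, by fun_prop, fun s => rfl, ?_⟩
    have := hX 0
    rw [zero_add] at this
    simp only [mul_one, mul_zero, this]
    have hm0' : m ≠ 0 := by omega
    field_simp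
    simp [hk, hm0']

/-- The annulus as the punctured complex plane. -/
def ex (z : Ann) : ℂ := (Real.exp z.2 : ℂ) * (AddCircle.toCircle z.1 : ℂ)

lemma ex_cont : Continuous ex := by
  unfold ex
  have : Continuous (fun z : Ann => (AddCircle.toCircle z.1 : ℂ)) :=
    continuous_subtype_val.comp (AddCircle.continuous_toCircle.comp continuous_fst)
  fun_prop

lemma ex_norm (z : Ann) : ‖ex z‖ = Real.exp z.2 := by
  unfold ex
  rw [norm_mul, Circle.norm_coe, mul_one, Complex.norm_real, Real.norm_of_nonneg (Real.exp_pos _).le]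

lemma ex_inj : Function.Injective ex := by
  intro z w h
  have h2 : z.2 = w.2 := by
    have := congrArg norm h
    rw [ex_norm, ex_norm] at this
    exact Real.exp_injective this
  refine Prod.ext ?_ h2
  unfold ex at h
  rw [h2] at h
  have h3 := mul_left_cancel₀ (by exact_mod_cast (Real.exp_pos _).ne') h
  exact AddCircle.injective_toCircle one_ne_zero (Circle.coe_injective h3)

lemma ex_arg (z : Ann) (a : ℝ) (h : (a : AddCircle (1 : ℝ)) = z.1) :
    ((Complex.arg (ex z) : ℝ) : Real.Angle) = ((2 * Real.pi * a : ℝ) : Real.Angle) := by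
  unfold ex
  rw [← h, AddCircle.toCircle_apply_mk, Circle.coe_exp, div_one]
  rw [Complex.arg_real_mul _ (Real.exp_pos _), Complex.arg_exp_mul_I, Real.Angle.coe_toIocMod]

lemma exists_lift_real {p : ℝ} [Fact (0 < p)] (H : ℝ → AddCircle p) (hH : Continuous H) :
    ∃ a : ℝ → ℝ, Continuous a ∧ ∀ s, (a s : AddCircle p) = H s := by
  have cov : IsCoveringMap ((↑) : ℝ → AddCircle p) := AddCircle.isCoveringMap_coe p
  obtain ⟨e, he⟩ := QuotientAddGroup.mk_surjective (H 0)
  obtain ⟨L, ⟨-, hL⟩, -⟩ := cov.existsUnique_continuousMap_lifts ⟨H, hH⟩ (a₀ := 0) (e₀ := e) he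
  exact ⟨L, L.continuous, fun q => congrFun hL q⟩

lemma degC (W : ℝ × ℝ → ℂ) (hW : Continuous W) (h0 : ∀ s t, W (s, t) ≠ 0)
    (hper : ∀ s t, W (s + 1, t) = W (s, t)) (a b : ℝ → ℝ) (ha : Continuous a) (hb : Continuous b)
    (hla : ∀ s, (a s : Real.Angle) = (Complex.arg (W (s, 0)) : Real.Angle))
    (hlb : ∀ s, (b s : Real.Angle) = (Complex.arg (W (s, 1)) : Real.Angle)) :
    a 1 - a 0 = b 1 - b 0 := by
  have : Fact (0 < 2 * Real.pi) := ⟨Real.two_pi_pos⟩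
  have hc : Continuous (fun q => (Complex.arg (W q) : Real.Angle)) := by
    rw [continuous_iff_continuousAt]
    intro q
    exact ContinuousAt.comp (f := W) (g := fun z => (Complex.arg z : Real.Angle))
      (Complex.continuousAt_arg_coe_angle (h0 q.1 q.2)) hW.continuousAt
  exact deg_const (p := 2 * Real.pi) (fun q => (Complex.arg (W q) : Real.Angle)) hc
    (by intro s t; simp only [hper]; rfl) a b ha hb hla hlb

lemma arg_lift (w : ℝ → ℂ) (hw : Continuous w) (h0 : ∀ s, w s ≠ 0) :
    ∃ a : ℝ → ℝ, Continuous a ∧ ∀ s, (a s : Real.Angle) = (Complex.arg (w s) : Real.Angle) := by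
  have : Fact (0 < 2 * Real.pi) := ⟨Real.two_pi_pos⟩
  have hc : Continuous (fun q => (Complex.arg (w q) : Real.Angle)) := by
    rw [continuous_iff_continuousAt]
    intro q
    exact ContinuousAt.comp (f := w) (g := fun z => (Complex.arg z : Real.Angle))
      (Complex.continuousAt_arg_coe_angle (h0 q)) hw.continuousAt
  exact exists_lift_real (p := 2 * Real.pi) (fun q => (Complex.arg (w q) : Real.Angle)) hc

lemma EssC.no_path {φ : C(AddCircle (1 : ℝ), Ann)} (h : EssC φ) (R : ℝ)
    (hR : ∀ x, |(φ x).2| < R) (α : ℝ → Ann) (hα : Continuous α) (h0 : (α 0).2 < -R)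
    (h1 : R < (α 1).2) (hd : ∀ t x, φ x ≠ α t) : False := by
  obtain ⟨a, ha, hl, hne⟩ := h
  let g : ℝ → ℂ := fun s => ex (φ (s : AddCircle (1 : ℝ)))
  have hg : Continuous g := ex_cont.comp (φ.continuous.comp (AddCircle.continuous_mk' (1 : ℝ)))
  have hgp : ∀ s, g (s + 1) = g s := by intro s; simp only [g, coe_add_one]
  have hgn : ∀ s, Real.exp (-R) < ‖g s‖ ∧ ‖g s‖ < Real.exp R := by
    intro s
    simp only [g, ex_norm, Real.exp_lt_exp]
    exact abs_lt.1 (hR _)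
  have hn0 : ‖ex (α 0)‖ < Real.exp (-R) := by rw [ex_norm, Real.exp_lt_exp]; exact h0
  have hn1 : Real.exp R < ‖ex (α 1)‖ := by rw [ex_norm, Real.exp_lt_exp]; exact h1
  have hex : Continuous (fun t => ex (α t)) := ex_cont.comp hα
  have nz : ∀ s t, g s - ex (α t) ≠ 0 := by
    intro s t hz
    exact hd t _ (ex_inj (sub_eq_zero.1 hz))
  obtain ⟨b0, hb0, hb0l⟩ := arg_lift (fun s => g s - ex (α 0)) (by fun_prop) (fun s => nz s 0)
  obtain ⟨b1, hb1, hb1l⟩ := arg_lift (fun s => g s - ex (α 1)) (by fun_prop) (fun s => nz s 1)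
  let cl : ℝ → ℝ := fun t => max 0 (min 1 t)
  have hcl : Continuous cl := by fun_prop
  have hcl0 : ∀ t, 0 ≤ cl t := fun t => le_max_left _ _
  have hcl1 : ∀ t, cl t ≤ 1 := fun t => max_le zero_le_one (min_le_left _ _)
  have c0 : cl 0 = 0 := by simp [cl]
  have c1 : cl 1 = 1 := by simp [cl]
  have E1 := degC (fun q => g q.1 - (cl q.2 : ℂ) * ex (α 0)) (by fun_prop) ?_
    (by intro s t; simp only [hgp]) (fun s => 2 * Real.pi * a s) b0 (by fun_prop) hb0 ?_ ?_
  have E2 := degC (fun q => g q.1 - ex (α q.2))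
    ((hg.comp continuous_fst).sub (hex.comp continuous_snd)) nz
    (by intro s t; simp only [hgp]) b0 b1 hb0 hb1 hb0l hb1l
  have E3 := degC (fun q => (cl q.2 : ℂ) * g q.1 - ex (α 1)) (by fun_prop) ?_
    (by intro s t; simp only [hgp]) (fun s => Complex.arg (-ex (α 1))) b1 (by fun_prop) hb1 ?_ ?_
  · apply hne
    have : 2 * Real.pi * (a 1 - a 0) = 0 := by
      linarith
    rcases mul_eq_zero.1 this with h | h
    · linarith [Real.two_pi_pos]
    · exact h
  · intro s t hz
    have : ‖(cl t : ℂ) * g s‖ = ‖ex (α 1)‖ := by rw [sub_eq_zero.1 hz]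
    rw [norm_mul, Complex.norm_real, Real.norm_of_nonneg (hcl0 t)] at this
    have := mul_le_of_le_one_left (norm_nonneg (g s)) (hcl1 t)
    linarith [(hgn s).2]
  · intro s; simp [c0]
  · intro s; rw [hb1l]; simp [c1]
  · intro s t hz
    have : ‖g s‖ = ‖(cl t : ℂ) * ex (α 0)‖ := by rw [sub_eq_zero.1 hz]
    rw [norm_mul, Complex.norm_real, Real.norm_of_nonneg (hcl0 t)] at this
    have := mul_le_of_le_one_left (norm_nonneg (ex (α 0))) (hcl1 t)
    linarith [(hgn s).1]
  · intro s; simp only [c0, Complex.ofReal_zero, zero_mul, sub_zero]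
    exact (ex_arg _ _ (hl s)).symm
  · intro s; rw [hb0l]; simp [c1]

lemma EssC.separates {φ : C(AddCircle (1 : ℝ), Ann)} (h : EssC φ) : SeparatesEnds (range φ) := by
  intro C hC hconn
  by_contra hcon
  push Not at hcon
  obtain ⟨hA, hB⟩ := hcon
  have hcomp : IsCompact (range φ) := isCompact_range φ.continuous
  obtain ⟨R, hR0, hR⟩ := bdd_of_compact hcomp
  obtain ⟨z1, hz1, hz1'⟩ := hA R
  obtain ⟨z0, hz0, hz0'⟩ := hB (-R)
  have hop : IsOpen (connectedComponentIn (range φ)ᶜ z0) :=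
    hcomp.isClosed.isOpen_compl.connectedComponentIn
  have hcc : IsConnected (connectedComponentIn (range φ)ᶜ z0) :=
    isConnected_connectedComponentIn_iff.2 (hC hz0)
  have hpc := hop.isConnected_iff_isPathConnected.1 hcc
  have hsub := hconn.isPreconnected.subset_connectedComponentIn hz0 hC
  have hJ := hpc.joinedIn z0 (hsub hz0) z1 (hsub hz1)
  refine h.no_path R (fun x => hR _ ⟨x, rfl⟩)
    (fun t => hJ.somePath (Set.projIcc 0 1 zero_le_one t))
    (hJ.somePath.continuous.comp continuous_projIcc) (by simpa using hz0') (by simpa using hz1') ?_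
  intro t x hx
  have := connectedComponentIn_subset _ _ (hJ.somePath_mem (Set.projIcc 0 1 zero_le_one t))
  exact this ⟨x, hx⟩

/-- `f` preserves each of the two ends. -/
def EndP (f : Ann → Ann) : Prop :=
  ∀ ε : ℝ, (ε = 1 ∨ ε = -1) → ∀ R : ℝ, ∃ R' : ℝ, ∀ z, R' < ε * z.2 → R < ε * (f z).2

lemma EndP.comp {f g : Ann → Ann} (hf : EndP f) (hg : EndP g) : EndP (fun z => f (g z)) := by
  intro ε hε R
  obtain ⟨R1, h1⟩ := hf ε hε R
  obtain ⟨R2, h2⟩ := hg ε hε R1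
  exact ⟨R2, fun z hz => h1 _ (h2 _ hz)⟩

lemma EndP.id : EndP (fun z => z) := fun ε hε R => ⟨R, fun z hz => hz⟩

lemma eps_conn (ε : ℝ) (hε : ε = 1 ∨ ε = -1) (M : ℝ) : IsPreconnected {z : Ann | M ≤ ε * z.2} := by
  rcases hε with rfl | rfl
  · simpa using up_conn M
  · convert low_conn (-M) using 3
    constructor <;> intro h <;> linarith

lemma iso_sign {f : Ann ≃ₜ Ann} (hiso : IsotopicToId f) : ∃ M : ℝ, 0 < M ∧
    ∀ ε : ℝ, (ε = 1 ∨ ε = -1) → ∀ z, M ≤ ε * (f z).2 → 0 < ε * z.2 := by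
  obtain ⟨H, hH, hh, hH0, hH1⟩ := hiso
  have hcK : IsCompact ((Icc (0 : ℝ) 1) ×ˢ {z : Ann | 0 ≤ z.2 ∧ z.2 ≤ 0}) :=
    isCompact_Icc.prod (slab_compact 0 0)
  obtain ⟨M, hM0, hM⟩ := bdd_of_compact (hcK.image hH)
  refine ⟨M, hM0, fun ε hε => ?_⟩
  have hMt : ∀ t ∈ Icc (0 : ℝ) 1, ∀ z : Ann, z.2 = 0 → |(H t z).2| < M := by
    intro t ht z hz
    exact hM _ ⟨(t, z), ⟨ht, by simp [hz]⟩, rfl⟩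
  have hεabs : ∀ y : ℝ, ε * y ≤ |y| := by
    intro y
    rcases hε with rfl | rfl
    · simpa using le_abs_self y
    · simpa using neg_le_abs y
  have hεε : ε * ε = 1 := by rcases hε with rfl | rfl <;> norm_num
  -- sign is constant
  have hsign : ∀ t ∈ Icc (0 : ℝ) 1, ∀ z w, M ≤ ε * (H t z).2 → M ≤ ε * (H t w).2 →
      0 < ε * z.2 → 0 < ε * w.2 := by
    intro t ht z w hz hw hzp
    by_contra hwn
    push Not at hwn
    obtain ⟨h, hh'⟩ := hh t
    have hp : IsPreconnected (h ⁻¹' {z : Ann | M ≤ ε * z.2}) := by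
      have := (eps_conn ε hε M).image h.symm h.symm.continuous.continuousOn
      rwa [h.image_symm] at this
    have hp2 := hp.image (fun z : Ann => ε * z.2) (by fun_prop)
    have hI := hp2.ordConnected
    have h0 : (0 : ℝ) ∈ (fun z : Ann => ε * z.2) '' (h ⁻¹' {z : Ann | M ≤ ε * z.2}) :=
      hI.out ⟨w, by simpa [← hh'] using hw, rfl⟩ ⟨z, by simpa [← hh'] using hz, rfl⟩ ⟨hwn, hzp.le⟩
    obtain ⟨q, hq, hq0⟩ := h0
    have hq2 : q.2 = 0 := by
      simp only at hq0
      have : ε * (ε * q.2) = 0 := by rw [hq0]; simp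
      rwa [← mul_assoc, hεε, one_mul] at this
    have h1 := hMt t ht q hq2
    have h2 : M ≤ ε * (H t q).2 := by rw [hh']; exact hq
    linarith [hεabs (H t q).2]
  have hopen : ∀ z, IsOpen {t : ℝ | M < ε * (H t z).2} := by
    intro z
    apply isOpen_lt continuous_const
    have : Continuous (fun t => H t z) := hH.comp (continuous_id.prodMk continuous_const)
    fun_prop
  let A : Set ℝ := ⋃ z ∈ {z : Ann | 0 < ε * z.2}, {t : ℝ | M < ε * (H t z).2}
  let B : Set ℝ := ⋃ z ∈ {z : Ann | ¬ 0 < ε * z.2}, {t : ℝ | M < ε * (H t z).2}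
  have hA : IsOpen A := isOpen_biUnion fun z _ => hopen z
  have hB : IsOpen B := isOpen_biUnion fun z _ => hopen z
  have hmemA : ∀ t, t ∈ A ↔ ∃ z, 0 < ε * z.2 ∧ M < ε * (H t z).2 := by
    intro t; simp [A]
  have hmemB : ∀ t, t ∈ B ↔ ∃ z, ¬ 0 < ε * z.2 ∧ M < ε * (H t z).2 := by
    intro t; simp [B]
  have hcov : ∀ t, t ∈ A ∪ B := by
    intro t
    obtain ⟨h, hh'⟩ := hh t
    obtain ⟨z, hz⟩ := h.surjective ((0 : AddCircle (1 : ℝ)), ε * (M + 1))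
    have hz2 : M < ε * (H t z).2 := by
      rw [hh', hz]; simp only; rw [← mul_assoc, hεε]; linarith
    by_cases hp : 0 < ε * z.2
    · exact Or.inl ((hmemA t).2 ⟨z, hp, hz2⟩)
    · exact Or.inr ((hmemB t).2 ⟨z, hp, hz2⟩)
  have hdis : Icc (0 : ℝ) 1 ∩ (A ∩ B) = ∅ := by
    rw [eq_empty_iff_forall_notMem]
    rintro t ⟨ht, hta, htb⟩
    obtain ⟨z, hz, hz'⟩ := (hmemA t).1 hta
    obtain ⟨w, hw, hw'⟩ := (hmemB t).1 htb
    exact hw (hsign t ht z w hz'.le hw'.le hz)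
  have h0A : (0 : ℝ) ∈ A := by
    refine (hmemA 0).2 ⟨((0 : AddCircle (1 : ℝ)), ε * (M + 1)), ?_, ?_⟩
    · simp only; rw [← mul_assoc, hεε]; linarith
    · rw [hH0]; simp only; rw [← mul_assoc, hεε]; linarith
  have h1A : (1 : ℝ) ∈ A := by
    by_contra h1
    have h1B : (1 : ℝ) ∈ B := (hcov 1).resolve_left h1
    have := isPreconnected_Icc (a := (0 : ℝ)) (b := 1) A B hA hB (fun t _ => hcov t)
      ⟨0, by simp, h0A⟩ ⟨1, by simp, h1B⟩
    rw [hdis] at this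
    exact this.ne_empty rfl
  obtain ⟨z, hz, hz'⟩ := (hmemA 1).1 h1A
  intro w hw
  exact hsign 1 (by simp) z w hz'.le (by rwa [hH1]) hz

lemma iso_EndP {f : Ann ≃ₜ Ann} (hiso : IsotopicToId f) : EndP f ∧ EndP f.symm := by
  obtain ⟨M, hM0, hM⟩ := iso_sign hiso
  have slabε : ∀ ε : ℝ, (ε = 1 ∨ ε = -1) → ∀ a b, IsCompact {z : Ann | a ≤ ε * z.2 ∧ ε * z.2 ≤ b} := by
    rintro ε (rfl | rfl) a b
    · simpa using slab_compact a b
    · convert slab_compact (-b) (-a) using 3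
      constructor <;> rintro ⟨h1, h2⟩ <;> constructor <;> linarith
  have hεabs : ∀ ε : ℝ, (ε = 1 ∨ ε = -1) → ∀ y : ℝ, ε * y ≤ |y| := by
    rintro ε (rfl | rfl) y
    · simpa using le_abs_self y
    · simpa using neg_le_abs y
  constructor
  · intro ε hε R
    obtain ⟨B, hB0, hB⟩ := bdd_of_compact ((slabε ε hε (-M) R).image f.symm.continuous)
    refine ⟨B, fun z hz => ?_⟩
    by_contra hcon
    push Not at hcon
    by_cases h : -M ≤ ε * (f z).2
    · have := hB z ⟨f z, ⟨h, hcon⟩, by simp⟩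
      linarith [hεabs ε hε z.2]
    · have := hM (-ε) (by rcases hε with rfl | rfl <;> simp) z (by linarith)
      linarith
  · intro ε hε R
    obtain ⟨B, hB0, hB⟩ := bdd_of_compact ((slabε ε hε 0 R).image f.continuous)
    refine ⟨max M B, fun w hw => ?_⟩
    by_contra hcon
    push Not at hcon
    have h1 := hM ε hε (f.symm w) (by simpa using ((le_max_left M B).trans_lt hw).le)
    have := hB w ⟨f.symm w, ⟨h1.le, hcon⟩, by simp⟩
    have h2 := (le_max_right M B).trans_lt hw
    linarith [hεabs ε hε w.2]

lemma nested {c d : Set Ann} (hc : IsCompact c) (hd : IsCompact d) (hcp : IsPreconnected c)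
    (hdp : IsPreconnected d) (hcs : SeparatesEnds c) (hds : SeparatesEnds d) (hcd : Disjoint c d)
    {R : ℝ} (hcR : ∀ z ∈ c, |z.2| < R) (hdR : ∀ z ∈ d, |z.2| < R) :
    closure (LC c R) ⊆ LC d R ∨ closure (LC d R) ⊆ LC c R := by
  have hcc := hc.isClosed
  have hdc := hd.isClosed
  -- main step
  have step : ∀ c d : Set Ann, IsClosed c → (∀ z ∈ c, |z.2| < R) → Disjoint c d →
      Disjoint d (LC c R) → closure (LC c R) ⊆ LC d R := by
    intro c d hc hcR hcd h
    apply (isPreconnected_connectedComponentIn (F := cᶜ)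
      (x := ((0 : AddCircle (1 : ℝ)), -R))).closure.subset_connectedComponentIn
    · exact subset_closure (low_sub_LC hcR (by simp))
    · intro z hz hzd
      rcases comp_closure hc _ hz with h1 | h1
      · exact Set.disjoint_left.1 h hzd h1
      · exact Set.disjoint_left.1 hcd h1 hzd
  have dich : ∀ c d : Set Ann, IsPreconnected c → Disjoint c d →
      ¬ Disjoint c (LC d R) → c ⊆ LC d R := by
    intro c d hcp hcd h
    obtain ⟨z, hz1, hz2⟩ := Set.not_disjoint_iff.1 h
    have := hcp.subset_connectedComponentIn hz1 (F := dᶜ) (fun w hw hwd => Set.disjoint_left.1 hcd hw hwd)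
    unfold LC at *
    rwa [connectedComponentIn_eq hz2]
  have usub : ∀ c d : Set Ann, (∀ z ∈ c, |z.2| < R) → SeparatesEnds c → d ⊆ LC c R →
      UC c R ⊆ UC d R := by
    intro c d hcR hcs h
    apply (isPreconnected_connectedComponentIn (F := cᶜ)
      (x := ((0 : AddCircle (1 : ℝ)), R))).subset_connectedComponentIn
    · exact up_sub_UC hcR (by simp)
    · intro z hz hzd
      exact Set.disjoint_left.1 (LC_UC_disj hcR hcs) (h hzd) hz
  by_cases h1 : Disjoint c (LC d R)
  · exact Or.inr (step d c hdc hdR hcd.symm h1)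
  by_cases h2 : Disjoint d (LC c R)
  · exact Or.inl (step c d hcc hcR hcd h2)
  exfalso
  have i1 := dich c d hcp hcd h1
  have i2 := dich d c hdp hcd.symm h2
  have e : UC c R = UC d R := (usub c d hcR hcs i2).antisymm (usub d c hdR hds i1)
  have hopen : IsOpen (UC c R) := hcc.isOpen_compl.connectedComponentIn
  have hclosed : IsClosed (UC c R) := by
    apply isClosed_of_closure_subset
    intro z hz
    rcases comp_closure hcc _ hz with h | h
    · exact h
    · have hz' : z ∈ closure (UC d R) := by rwa [← e]
      rcases comp_closure hdc _ hz' with h' | h'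
      · rw [e]; exact h'
      · exact absurd h' (Set.disjoint_left.1 hcd h)
  have hmem : ((0 : AddCircle (1 : ℝ)), R) ∈ UC c R := up_sub_UC hcR (by simp)
  have huniv := IsClopen.eq_univ ⟨hclosed, hopen⟩ ⟨_, hmem⟩
  have hmem' : ((0 : AddCircle (1 : ℝ)), -R) ∈ LC c R := low_sub_LC hcR (by simp)
  exact Set.disjoint_left.1 (LC_UC_disj hcR hcs) hmem' (huniv ▸ mem_univ _)

lemma image_sep {c : Set Ann} (g : Ann ≃ₜ Ann) (hg : EndP g.symm) (hcs : SeparatesEnds c) :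
    SeparatesEnds (g '' c) := by
  intro C hC hconn
  have h1 : g.symm '' C ⊆ cᶜ := by
    rintro _ ⟨z, hz, rfl⟩ hzc
    exact hC hz ⟨_, hzc, by simp⟩
  rcases hcs _ h1 (hconn.image _ g.symm.continuous.continuousOn) with ⟨M, hM⟩ | ⟨M, hM⟩
  · left
    obtain ⟨R', hR'⟩ := hg 1 (Or.inl rfl) M
    refine ⟨R', fun z hz => ?_⟩
    by_contra hcon
    have h2 := hR' z (by linarith)
    have := hM _ ⟨z, hz, rfl⟩
    linarith
  · right
    obtain ⟨R', hR'⟩ := hg (-1) (Or.inr rfl) (-M)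
    refine ⟨-R', fun z hz => ?_⟩
    by_contra hcon
    have h2 := hR' z (by linarith)
    have := hM _ ⟨z, hz, rfl⟩
    linarith

lemma image_LC {c : Set Ann} (g : Ann ≃ₜ Ann) (hg : EndP g) {R : ℝ} (hcR : ∀ z ∈ c, |z.2| < R)
    (hdR : ∀ z ∈ g '' c, |z.2| < R) : g '' LC c R = LC (g '' c) R := by
  obtain ⟨R', hR'⟩ := hg (-1) (Or.inr rfl) R
  let p : Ann := ((0 : AddCircle (1 : ℝ)), -(max R (R' + 1)))
  have hp : p ∈ LC c R := low_sub_LC hcR (by simp [p])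
  have hpc : p ∈ cᶜ := connectedComponentIn_subset _ _ hp
  have hgp : g p ∈ LC (g '' c) R := by
    apply low_sub_LC hdR
    have := hR' p (by simp [p])
    simp only [mem_setOf_eq]
    linarith
  have e1 : LC c R = connectedComponentIn cᶜ p := connectedComponentIn_eq hp
  have e2 : LC (g '' c) R = connectedComponentIn (g '' c)ᶜ (g p) := connectedComponentIn_eq hgp
  rw [e1, e2, g.image_connectedComponentIn hpc, Set.image_compl_eq g.bijective]

/-- Iterates of a homeomorphism. -/
def hpow (f : Ann ≃ₜ Ann) : ℕ → (Ann ≃ₜ Ann)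
  | 0 => Homeomorph.refl _
  | n + 1 => (hpow f n).trans f

lemma hpow_succ (f : Ann ≃ₜ Ann) (n : ℕ) (z : Ann) : hpow f (n + 1) z = f (hpow f n z) := rfl

lemma hpow_iter (f : Ann ≃ₜ Ann) (n : ℕ) (z : Ann) : hpow f n z = f^[n] z := by
  induction n with
  | zero => rfl
  | succ n ih => rw [hpow_succ, ih, Function.iterate_succ_apply']

lemma hpow_symm (f : Ann ≃ₜ Ann) (n : ℕ) (z : Ann) : hpow f.symm n (hpow f n z) = z := by
  rw [hpow_iter, hpow_iter]
  exact Function.LeftInverse.iterate (f.symm_apply_apply) n z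

lemma hpow_EndP {f : Ann ≃ₜ Ann} (h1 : EndP f) (h2 : EndP f.symm) (n : ℕ) :
    EndP (hpow f n) ∧ EndP (hpow f n).symm := by
  induction n with
  | zero => exact ⟨EndP.id, EndP.id⟩
  | succ n ih => exact ⟨h1.comp ih.1, ih.2.comp h2⟩

lemma attr_circle (g : Ann ≃ₜ Ann) (h1 : EndP g) (h2 : EndP g.symm) {N : ℕ} (hN : 1 ≤ N)
    {U : Set Ann} (hU : IsOpen U) {R M : ℝ} (hlow : ∀ z : Ann, z.2 ≤ -R → z ∈ U)
    (hup : ∀ z ∈ U, z.2 ≤ M) (hatt : ∀ z ∈ closure U, hpow g N z ∈ U) :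
    ∃ φ : C(AddCircle (1 : ℝ), Ann), Function.Injective φ ∧ EssC φ ∧
      Disjoint (range φ) (g '' range φ) := by
  have hDc : IsClosed (hpow g N '' closure U) := (hpow g N).isClosedMap _ isClosed_closure
  have hdis : Disjoint (hpow g N '' closure U) Uᶜ := by
    rw [Set.disjoint_left]
    rintro _ ⟨z, hz, rfl⟩ h
    exact h (hatt z hz)
  obtain ⟨u, hu0, hu1, -⟩ := exists_continuous_zero_one_of_isClosed hDc hU.isClosed_compl hdis
  have hN0 : (0 : ℝ) < (N : ℝ) + 1 := by positivity
  let l : ℕ → ℝ := fun i => ((i : ℝ) + 1) / ((N : ℝ) + 1)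
  have hl0 : ∀ i, 0 < l i := fun i => by positivity
  have hlm : ∀ i, l i < l (i + 1) := fun i => by
    simp only [l]; push_cast; gcongr; linarith
  have hl1 : ∀ i < N, l i < 1 := fun i hi => by
    simp only [l]; rw [div_lt_one hN0]
    have : (i : ℝ) < N := by exact_mod_cast hi
    linarith
  have huU : ∀ z, u z < 1 → z ∈ U := by
    intro z hz
    by_contra h
    have := hu1 h
    simp at this
    linarith
  let V : Set Ann := ⋃ i : Fin N, hpow g i '' {z | u z < l i}
  let A : Set Ann := ⋃ i : Fin N, hpow g i '' {z | u z ≤ l i}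
  have hVo : IsOpen V := isOpen_iUnion fun i =>
    (hpow g i).isOpenMap _ (isOpen_lt u.continuous continuous_const)
  have hAc : IsClosed A := isClosed_iUnion_of_finite fun i =>
    (hpow g i).isClosedMap _ (isClosed_le u.continuous continuous_const)
  have hVA : V ⊆ A := iUnion_mono fun i => image_mono fun z (hz : u z < l i) => (le_of_lt hz : u z ≤ l i)
  have hgA : g '' A ⊆ V := by
    rintro _ ⟨z, hz, rfl⟩
    obtain ⟨i, w, hw, rfl⟩ := mem_iUnion.1 hz
    rw [← hpow_succ]
    by_cases hi : (i : ℕ) + 1 < N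
    · exact mem_iUnion.2 ⟨⟨i + 1, hi⟩, w, lt_of_le_of_lt hw (hlm i), rfl⟩
    · have e : (i : ℕ) + 1 = N := by omega
      rw [e]
      have hwU : w ∈ U := huU _ (lt_of_le_of_lt hw (hl1 i i.2))
      refine mem_iUnion.2 ⟨⟨0, hN⟩, hpow g N w, ?_, rfl⟩
      have := hu0 (mem_image_of_mem (hpow g N) (subset_closure hwU))
      simp at this
      simp only [mem_setOf_eq, this]
      exact hl0 0
  have hgAc : IsClosed (g '' A) := g.isClosedMap _ hAc
  obtain ⟨V', hV'o, hAV', hV'V⟩ := normal_exists_closure_subset hgAc hVo hgA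
  -- lower bound
  obtain ⟨R1, hR1⟩ : ∃ R1 : ℝ, ∀ z : Ann, z.2 < R1 → z ∈ g '' A := by
    obtain ⟨r, hr⟩ := ((hpow_EndP h1 h2 N).2.comp h2) (-1) (Or.inr rfl) R
    refine ⟨-r, fun z hz => ?_⟩
    have := hr z (by linarith)
    have hw := hlow ((hpow g N).symm (g.symm z)) (by linarith)
    refine ⟨g.symm z, mem_iUnion.2 ⟨⟨0, hN⟩, g.symm z, ?_, rfl⟩, by simp⟩
    have h0 := hu0 (mem_image_of_mem (hpow g N) (subset_closure hw))
    simp at h0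
    simp only [mem_setOf_eq, h0]
    exact (hl0 0).le
  -- upper bound
  obtain ⟨M1, hM1⟩ : ∃ M1 : ℝ, ∀ z ∈ V, z.2 ≤ M1 := by
    have : ∀ i : Fin N, ∃ r : ℝ, ∀ z, r < 1 * z.2 → M < 1 * ((hpow g i).symm z).2 :=
      fun i => (hpow_EndP h1 h2 i).2 1 (Or.inl rfl) M
    choose r hr using this
    obtain ⟨B, hB⟩ := (Set.finite_range r).bddAbove
    refine ⟨B, fun z hz => ?_⟩
    obtain ⟨i, w, hw, rfl⟩ := mem_iUnion.1 hz
    by_contra! hlt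
    have h3 := hB (mem_range_self i)
    have h4 := hr i (hpow g i w) (by linarith)
    simp at h4
    have := hup w (huU _ (lt_trans hw (hl1 i i.2)))
    linarith
  have hKO : frontier V' ⊆ V \ (g '' A) := by
    intro z hz
    refine ⟨hV'V hz.1, fun h => ?_⟩
    have := hz.2
    rw [hV'o.interior_eq] at this
    exact this (hAV' h)
  have hKc : IsCompact (frontier V') := by
    refine (slab_compact R1 M1).of_isClosed_subset isClosed_frontier fun z hz => ⟨?_, hM1 _ (hKO hz).1⟩
    by_contra! h
    exact (hKO hz).2 (hR1 z h)
  have hKs : SeparatesEnds (frontier V') := by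
    intro C hC hconn
    have hcov : C ⊆ V' ∪ (closure V')ᶜ := by
      intro z hz
      by_cases h : z ∈ V'
      · exact Or.inl h
      · refine Or.inr fun h' => hC hz ⟨h', ?_⟩
        rwa [hV'o.interior_eq]
    rcases hconn.isPreconnected.subset_or_subset hV'o isClosed_closure.isOpen_compl
      (disjoint_compl_right.mono_left subset_closure) hcov with h | h
    · exact Or.inl ⟨M1, fun z hz => hM1 z (hV'V (subset_closure (h hz)))⟩
    · refine Or.inr ⟨R1, fun z hz => ?_⟩
      by_contra! hlt
      exact h hz (subset_closure (hAV' (hR1 z hlt)))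
  obtain ⟨φ, hinj, hr, hess⟩ := exists_circle hKc hKs (hVo.sdiff hgAc) hKO
  refine ⟨φ, hinj, hess, ?_⟩
  rw [Set.disjoint_left]
  rintro _ hz ⟨w, hw, rfl⟩
  exact (hr hz).2 ⟨w, hVA (hr hw).1, rfl⟩

lemma key_meet {f : Ann ≃ₜ Ann} (hiso : IsotopicToId f) (hint : IntersectionProperty f)
    {K : Set Ann} (hK : IsCompact K) (hsep : SeparatesEnds K) {n : ℕ} (hn : 1 ≤ n) :
    ∃ z ∈ K, f^[n] z ∈ K := by
  by_contra! hno
  obtain ⟨h1, h2⟩ := iso_EndP hiso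
  obtain ⟨e1, e2⟩ := hpow_EndP h1 h2 n
  set p := hpow f n with hp
  have hdis : Disjoint K (p '' K) := by
    rw [Set.disjoint_left]
    rintro _ hz ⟨w, hw, rfl⟩
    rw [hp, hpow_iter] at hz
    exact hno w hw hz
  obtain ⟨A, B, hA, hB, hKA, hKB, hAB⟩ := SeparatedNhds.of_isCompact_isCompact hK (hK.image p.continuous) hdis
  obtain ⟨φ, hinj, hr, hess⟩ := exists_circle hK hsep (O := A ∩ p ⁻¹' B)
    (hA.inter (hB.preimage p.continuous)) (fun z hz => ⟨hKA hz, hKB ⟨z, hz, rfl⟩⟩)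
  set c := range φ with hc
  have hcc : IsCompact c := isCompact_range φ.continuous
  have hcp : IsPreconnected c := isPreconnected_range φ.continuous
  have hcs : SeparatesEnds c := hess.separates
  have hds : SeparatesEnds (p '' c) := image_sep p e2 hcs
  have hdc := hcc.image p.continuous
  have hcd : Disjoint c (p '' c) := by
    refine hAB.mono (fun z hz => (hr hz).1) ?_
    rintro _ ⟨w, hw, rfl⟩
    exact (hr hw).2
  obtain ⟨R, -, hR⟩ := bdd_of_compact (hcc.union hdc)
  have hcR : ∀ z ∈ c, |z.2| < R := fun z hz => hR z (Or.inl hz)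
  have hdR : ∀ z ∈ p '' c, |z.2| < R := fun z hz => hR z (Or.inr hz)
  have him := image_LC p e1 hcR hdR
  have hUo : IsOpen (LC c R) := hcc.isClosed.isOpen_compl.connectedComponentIn
  obtain ⟨M, hM⟩ := LC_bdd hcR hcs
  have hlow : ∀ z : Ann, z.2 ≤ -R → z ∈ LC c R := fun z hz => low_sub_LC hcR hz
  rcases nested hcc hdc hcp (hcp.image _ p.continuous.continuousOn) hcs hds hcd hcR hdR with h | h
  · obtain ⟨ψ, i1, i2, i3⟩ := attr_circle f.symm h2 h1 hn hUo hlow hM (fun z hz => by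
      have := h hz
      rw [← him] at this
      obtain ⟨w, hw, rfl⟩ := this
      rw [hp, hpow_symm]
      exact hw)
    obtain ⟨_, hz, w, hw, rfl⟩ := hint (range ψ) ⟨ψ, i1, rfl, i2.not_null⟩
    exact Set.disjoint_left.1 i3 hw ⟨_, hz, by simp⟩
  · obtain ⟨ψ, i1, i2, i3⟩ := attr_circle f h1 h2 hn hUo hlow hM (fun z hz => by
      apply h
      rw [← him, ← p.image_closure]
      exact ⟨z, hz, rfl⟩)
    obtain ⟨z, hz, hz'⟩ := hint (range ψ) ⟨ψ, i1, rfl, i2.not_null⟩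
    exact Set.disjoint_left.1 i3 hz hz'

/-- Proposition 5.1 (2): if a compact set `K` separates the two ends of 𝔸, then
`Rot_weak,K(F) ≠ ∅`; consequently `Rot_weak(F) ≠ ∅`. -/
theorem rotWeakK_nonempty_of_separating
    (f : Ann ≃ₜ Ann) (F : Plane ≃ₜ Plane)
    (hiso : IsotopicToId f) (hint : IntersectionProperty f) (hlift : IsLift f F)
    (K : Set Ann) (hK : IsCompact K) (hsep : SeparatesEnds K) :
    (RotWeakK ⇑F K).Nonempty ∧ (RotWeak ⇑F).Nonempty := by
  have hmain : (RotWeakK ⇑F K).Nonempty := by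
    have hit : ∀ n z, prj (F^[n] z) = f^[n] (prj z) := by
      intro n
      induction n with
      | zero => intro z; rfl
      | succ n ih =>
        intro z
        rw [Function.iterate_succ_apply', Function.iterate_succ_apply', hlift, ih]
    have hex : ∀ k : ℕ, ∃ z : Plane, prj z ∈ K ∧ prj (F^[k + 1] z) ∈ K := by
      intro k
      obtain ⟨z, hz, hz'⟩ := key_meet hiso hint hK hsep (n := k + 1) (by omega)
      obtain ⟨w, rfl⟩ := prj_openQuot.surjective z
      exact ⟨w, hz, by rwa [hit]⟩
    choose zs hz1 hz2 using hex
    obtain ⟨r, φ, hφ, hr⟩ := CompactSpace.tendsto_subseq (fun k : ℕ =>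
      ((((F^[k + 1] (zs k)).1 - (zs k).1) / ((k + 1 : ℕ) : ℝ) : ℝ) : EReal))
    refine ⟨r, fun k => zs (φ k), fun k => φ k + 1, fun k => hz1 _, fun k => hz2 _,
      fun k => Nat.succ_pos _, ?_, hr⟩
    exact (tendsto_add_atTop_nat 1).comp hφ.tendsto_atTop
  refine ⟨hmain, ?_⟩
  obtain ⟨r, hr⟩ := hmain
  exact ⟨r, mem_biUnion (show K ∈ {K : Set Ann | IsCompact K} from hK) hr⟩
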